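/- arXiv:2309.15841 — 4 statements merged into one kernel-verified Lean document; each statement's English description precedes it below -/
import Mathlib

section
/- Let k ≥ 2 and let X be a k-regular finite simple graph on n vertices with m edges (so the number of darts is 2m = nk). Then the characteristic polynomial (over ℚ) of the edge Laplacian N(X) equals ((x − k)(x − (k − 2)))^{m − n} · det( ((x − k + 1)² + (k − 1)) · I_n + (x − k + 1) · A ), where A is the adjacency matrix of X (mapped into ℚ[x]) and the determinant is taken over the polynomial ring ℚ[x]. In particular, the eigenvalues of N(X) are k−1±1, each with multiplicity m−n, together with k − 1 − (λ ± √(λ² − 4(k−1)))/2 for each eigenvalue λ of A. -/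
open Matrix Polynomial

variable {V : Type*} [Fintype V] [DecidableEq V]

/-- The edge adjacency matrix of a graph, indexed by darts. -/
def edgeAdj (R : Type*) [Ring R] (G : SimpleGraph V) [DecidableRel G.Adj] :
    Matrix G.Dart G.Dart R :=
  fun d e => if d.toProd.2 = e.toProd.1 ∧ d.toProd.1 ≠ e.toProd.2 then 1 else 0

/-- The diagonal matrix with `(d,d)` entry `deg(head d) - 1`. -/
def degDiag (R : Type*) [Ring R] (G : SimpleGraph V) [DecidableRel G.Adj] :
    Matrix G.Dart G.Dart R :=
  Matrix.diagonal fun d => (G.degree d.toProd.2 : R) - 1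

/-- The edge Laplacian `N = D - M`. -/
def edgeLap (R : Type*) [Ring R] (G : SimpleGraph V) [DecidableRel G.Adj] :
    Matrix G.Dart G.Dart R :=
  degDiag R G - edgeAdj R G

/-!
Let `H` and `T` be the head and tail incidence matrices of the darts and `J` the permutation matrix
of dart reversal, so that `M = H T - J`, `T H = A`, `T J H` is the degree matrix and `J² = 1`.
For a scalar `y` this gives `(y + M)(y + J) = (y² - 1) + H T (y + J)`. By Sylvester's identity
`det (c + P Q)` and `det (c + Q P)` agree up to powers of `c`, which replaces the right-hand side by
the vertex matrix `(y² - 1) + T (y + J) H = (y² - 1) + y A + deg`. Finally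
`det (y + J) = (y² - 1)^m` because `J` swaps the two darts of each edge, and cancelling it leaves
Bass's formula for an arbitrary graph. In the `k`-regular case `x - N = y + M` with
`y = x - (k - 1)`.
-/

section Matrix

variable {ι κ R : Type*} [CommRing R]

theorem pow_card_mul_det_smul_one_add_mul_comm [Fintype ι] [DecidableEq ι] [Fintype κ]
    [DecidableEq κ] (c : R) (A : Matrix ι κ R) (B : Matrix κ ι R) :
    c ^ Fintype.card κ * (c • 1 + A * B).det = c ^ Fintype.card ι * (c • 1 + B * A).det := by
  simpa [Matrix.eval_charpoly, Matrix.smul_one_eq_diagonal] using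
    congrArg (Polynomial.eval c) (Matrix.charpoly_mul_comm' (-A) B)

theorem charpoly_smul_one_sub [Fintype ι] [DecidableEq ι] (a : R) (M : Matrix ι ι R) :
    (a • 1 - M).charpoly = ((X - C a) • 1 + M.map C).det := by
  rw [Matrix.charpoly]
  congr 1
  ext1 i j
  obtain rfl | hij := eq_or_ne i j
  · simp [sub_sub_eq_add_sub, sub_add_eq_add_sub]
  · simp [hij]

theorem exists_equiv_fin_two_prod_of_involutive {σ : ι → ι} (hσ : Function.Involutive σ)
    (hfix : ∀ i, σ i ≠ i) :
    ∃ (s : Set ι) (e : Fin 2 × s ≃ ι), ∀ i, e (0, i) = i ∧ e (1, i) = σ i := by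
  -- Each orbit is represented by its smaller element for some well-ordering of `ι`.
  let s : Set ι := {i | WellOrderingRel i (σ i)}
  have mem_or (i : ι) : i ∈ s ∨ σ i ∈ s := by
    rcases trichotomous_of WellOrderingRel i (σ i) with h | h | h
    · exact .inl h
    · exact absurd h.symm (hfix i)
    · exact .inr (by simpa only [s, Set.mem_ofPred_eq, hσ i] using h)
  have apply_notMem {i : ι} (hi : i ∈ s) : σ i ∉ s := fun h ↦
    asymm_of WellOrderingRel hi (by simpa only [s, Set.mem_ofPred_eq, hσ i] using h)
  let f : Fin 2 × s → ι := fun p ↦ ![p.2.1, σ p.2] p.1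
  have f_injective : f.Injective := by
    rintro ⟨a, i, hi⟩ ⟨b, j, hj⟩ h
    fin_cases a <;> fin_cases b
    · obtain rfl : i = j := h
      rfl
    · obtain rfl : i = σ j := h
      exact absurd hi (apply_notMem hj)
    · obtain rfl : σ i = j := h
      exact absurd hj (apply_notMem hi)
    · obtain rfl : i = j := hσ.injective h
      rfl
  have f_surjective : f.Surjective := fun i ↦ (mem_or i).elim
    (fun hi ↦ ⟨(0, ⟨i, hi⟩), rfl⟩) (fun hi ↦ ⟨(1, ⟨σ i, hi⟩), hσ i⟩)
  exact ⟨s, .ofBijective f ⟨f_injective, f_surjective⟩, fun i ↦ ⟨rfl, rfl⟩⟩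

theorem det_smul_one_add_permMatrix_of_involutive [Fintype ι] [DecidableEq ι] {σ : Equiv.Perm ι}
    (hσ : Function.Involutive σ) (hfix : ∀ i, σ i ≠ i) (y : R) :
    (y • 1 + σ.permMatrix R).det = (y ^ 2 - 1) ^ (Fintype.card ι / 2) := by
  classical
  obtain ⟨s, e, he⟩ := exists_equiv_fin_two_prod_of_involutive hσ hfix
  have card_eq : Fintype.card ι / 2 = Fintype.card s := by
    simp [← Fintype.card_congr e]
  have submatrix_eq : (y • 1 + σ.permMatrix R).submatrix e e =
      blockDiagonal fun _ : s ↦ !![y, 1; 1, y] := by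
    ext ⟨a, i⟩ ⟨b, j⟩
    have apply_apply_zero : σ (e (0, i)) = e (1, i) := by rw [(he i).1, (he i).2]
    have apply_apply_one : σ (e (1, i)) = e (0, i) := by rw [← apply_apply_zero, hσ]
    fin_cases a <;> fin_cases b <;>
      simp [PEquiv.toMatrix_apply, blockDiagonal_apply, one_apply, apply_apply_zero,
        apply_apply_one]
  rw [← det_submatrix_equiv_self e, submatrix_eq, det_blockDiagonal, card_eq]
  simp [det_fin_two_of, sq]

end Matrix

section Incidence

variable (R : Type*) [Ring R] (G : SimpleGraph V)

/-- The reversal `σ` of darts, bundled as a permutation so that `Equiv.Perm.permMatrix` applies: its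
matrix is the `J` that corrects for backtracking in `edgeAdj`. -/
def dartReversal : Equiv.Perm G.Dart :=
  SimpleGraph.Dart.symm_involutive.toPerm

/-- The incidence matrix `H` of darts and their heads, a factor of `edgeAdj`. -/
def dartHeadMatrix : Matrix G.Dart V R :=
  Matrix.of fun d v ↦ if d.snd = v then 1 else 0

/-- The incidence matrix `T` of darts and their tails, with rows indexed by vertices so that it can
be multiplied by `dartHeadMatrix` on either side. -/
def dartTailMatrix : Matrix V G.Dart R :=
  Matrix.of fun v d ↦ if d.fst = v then 1 else 0

variable [DecidableRel G.Adj]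

section Map

variable {R} {S : Type*} [Ring S] (f : R →+* S)

omit [Fintype V] in
theorem edgeAdj_map : (edgeAdj R G).map f = edgeAdj S G := by
  ext d e
  simp [edgeAdj, apply_ite f]

omit [Fintype V] [DecidableEq V] in
theorem adjMatrix_map : (G.adjMatrix R).map f = G.adjMatrix S := by
  ext v w
  simp [apply_ite f]

end Map

theorem edgeAdj_eq_dartHeadMatrix_mul_dartTailMatrix_sub :
    edgeAdj R G =
      dartHeadMatrix R G * dartTailMatrix R G - (dartReversal G).permMatrix R := by
  ext d e
  have symm_eq_iff : d.symm = e ↔ d.snd = e.fst ∧ d.fst = e.snd := by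
    rw [SimpleGraph.Dart.ext_iff, Prod.ext_iff]; rfl
  have head_mul_tail_apply : (dartHeadMatrix R G * dartTailMatrix R G) d e =
      if d.snd = e.fst then 1 else 0 := by
    simp [Matrix.mul_apply, dartHeadMatrix, dartTailMatrix, eq_comm]
  have reversal_apply : (dartReversal G).permMatrix R d e = if d.symm = e then 1 else 0 := by
    simp [PEquiv.toMatrix_apply, dartReversal]
  simp only [Matrix.sub_apply, head_mul_tail_apply, reversal_apply, symm_eq_iff, edgeAdj]
  split_ifs <;> simp_all

theorem dartTailMatrix_mul_dartHeadMatrix :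
    dartTailMatrix R G * dartHeadMatrix R G = G.adjMatrix R := by
  ext v w
  simp only [Matrix.mul_apply, dartTailMatrix, dartHeadMatrix, Matrix.of_apply, mul_ite, mul_one,
    mul_zero, ← ite_and, SimpleGraph.adjMatrix_apply]
  by_cases hvw : G.Adj v w
  · have fiber_iff (d : G.Dart) : d.snd = w ∧ d.fst = v ↔ d = ⟨(v, w), hvw⟩ := by
      rw [SimpleGraph.Dart.ext_iff, Prod.ext_iff, and_comm]
    simp [fiber_iff, hvw]
  · have fiber_empty (d : G.Dart) : ¬(d.snd = w ∧ d.fst = v) := by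
      rintro ⟨rfl, rfl⟩
      exact hvw d.adj
    simp [fiber_empty, hvw]

theorem dartReversal_mul_dartHeadMatrix :
    (dartReversal G).permMatrix R * dartHeadMatrix R G = (dartTailMatrix R G)ᵀ := by
  rw [PEquiv.toMatrix_toPEquiv_mul]
  rfl

theorem dartTailMatrix_mul_transpose :
    dartTailMatrix R G * (dartTailMatrix R G)ᵀ = G.degMatrix R := by
  ext v w
  obtain rfl | hvw := eq_or_ne v w
  · simp [Matrix.mul_apply, dartTailMatrix, SimpleGraph.degMatrix, ← ite_and,
      G.dart_fst_fiber_card_eq_degree]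
  · have fst_ne (d : G.Dart) : ¬(d.fst = w ∧ d.fst = v) := fun h ↦ hvw (h.2.symm.trans h.1)
    simp [Matrix.mul_apply, dartTailMatrix, SimpleGraph.degMatrix, ← ite_and, hvw, fst_ne]

theorem dartReversal_mul_self :
    (dartReversal G).permMatrix R * (dartReversal G).permMatrix R = 1 := by
  have mul_self : dartReversal G * dartReversal G = 1 := Equiv.ext SimpleGraph.Dart.symm_symm
  rw [← permMatrix_mul, mul_self, permMatrix_one]

end Incidence

section Bass

variable (R : Type*) [CommRing R] (G : SimpleGraph V) [DecidableRel G.Adj]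

theorem det_smul_one_add_dartReversal (y : R) :
    (y • 1 + (dartReversal G).permMatrix R).det = (y ^ 2 - 1) ^ G.edgeFinset.card := by
  rw [det_smul_one_add_permMatrix_of_involutive SimpleGraph.Dart.symm_involutive
      SimpleGraph.Dart.symm_ne, G.dart_card_eq_twice_card_edges, Nat.mul_div_cancel_left _ two_pos]

theorem smul_one_add_edgeAdj_mul_smul_one_add_dartReversal (y : R) :
    (y • 1 + edgeAdj R G) * (y • 1 + (dartReversal G).permMatrix R) =
      (y ^ 2 - 1) • 1 +
        dartHeadMatrix R G * (dartTailMatrix R G * (y • 1 + (dartReversal G).permMatrix R)) := by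
  have sub_mul_add : (y • 1 - (dartReversal G).permMatrix R) *
      (y • 1 + (dartReversal G).permMatrix R) = (y ^ 2 - 1) • 1 := by
    rw [← ((Commute.one_left _).smul_left y).mul_self_sub_mul_self_eq', dartReversal_mul_self,
      smul_mul_smul_comm, mul_one, sub_smul, one_smul, sq]
  rw [edgeAdj_eq_dartHeadMatrix_mul_dartTailMatrix_sub, ← sub_mul_add, ← Matrix.mul_assoc,
    ← Matrix.add_mul]
  congr 1
  abel

theorem dartTailMatrix_mul_smul_one_add_dartReversal_mul_dartHeadMatrix (y : R) :
    dartTailMatrix R G * (y • 1 + (dartReversal G).permMatrix R) * dartHeadMatrix R G =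
      y • G.adjMatrix R + G.degMatrix R := by
  rw [Matrix.mul_assoc, Matrix.add_mul, dartReversal_mul_dartHeadMatrix, Matrix.mul_add,
    dartTailMatrix_mul_transpose, Matrix.smul_mul, Matrix.one_mul, Matrix.mul_smul,
    dartTailMatrix_mul_dartHeadMatrix]

variable {R} in
theorem pow_card_mul_det_smul_one_add_edgeAdj {y : R} (hy : IsLeftRegular (y ^ 2 - 1)) :
    (y ^ 2 - 1) ^ Fintype.card V * (y • 1 + edgeAdj R G).det =
      (y ^ 2 - 1) ^ G.edgeFinset.card *
        ((y ^ 2 - 1) • 1 + y • G.adjMatrix R + G.degMatrix R).det := by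
  have sylvester := pow_card_mul_det_smul_one_add_mul_comm (y ^ 2 - 1) (dartHeadMatrix R G)
    (dartTailMatrix R G * (y • 1 + (dartReversal G).permMatrix R))
  rw [← smul_one_add_edgeAdj_mul_smul_one_add_dartReversal, det_mul,
    det_smul_one_add_dartReversal, dartTailMatrix_mul_smul_one_add_dartReversal_mul_dartHeadMatrix,
    ← add_assoc, G.dart_card_eq_twice_card_edges] at sylvester
  apply hy.pow G.edgeFinset.card
  linear_combination sylvester

end Bass

section Regular

variable (R : Type*) {G : SimpleGraph V} [DecidableRel G.Adj] {k : ℕ}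

theorem edgeLap_of_isRegularOfDegree [Ring R] (hreg : G.IsRegularOfDegree k) :
    edgeLap R G = ((k : R) - 1) • 1 - edgeAdj R G := by
  simp only [edgeLap, degDiag, hreg.degree_eq, Matrix.smul_one_eq_diagonal]

theorem degMatrix_of_isRegularOfDegree [Ring R] (hreg : G.IsRegularOfDegree k) :
    G.degMatrix R = (k : R) • 1 := by
  simp only [SimpleGraph.degMatrix, hreg.degree_eq, Matrix.smul_one_eq_diagonal]

omit [DecidableEq V] in
theorem card_le_card_edgeFinset_of_isRegularOfDegree (hk : 2 ≤ k) (hreg : G.IsRegularOfDegree k) :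
    Fintype.card V ≤ G.edgeFinset.card := by
  have handshake := G.sum_degrees_eq_twice_card_edges
  simp only [hreg.degree_eq, Finset.sum_const, Finset.card_univ, smul_eq_mul] at handshake
  nlinarith

theorem stmt8_general [CommRing R] (hk : 2 ≤ k) (hreg : G.IsRegularOfDegree k) :
    (edgeLap R G).charpoly =
      ((X - C (k : R)) * (X - C ((k : R) - 2))) ^ (G.edgeFinset.card - Fintype.card V) *
        (((X - C ((k : R) - 1)) ^ 2 + C ((k : R) - 1)) • (1 : Matrix V V R[X]) +
            (X - C ((k : R) - 1)) • (G.adjMatrix R).map C).det := by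
  have factor_eq : (X - C (k : R)) * (X - C ((k : R) - 2)) = (X - C ((k : R) - 1)) ^ 2 - 1 := by
    simp only [C_sub, C_1, C_ofNat]
    ring
  have factor_monic : ((X - C ((k : R) - 1)) ^ 2 - 1).Monic :=
    factor_eq ▸ (monic_X_sub_C _).mul (monic_X_sub_C _)
  have vertex_matrix_eq (y : R[X]) :
      (y ^ 2 - 1) • (1 : Matrix V V R[X]) + y • G.adjMatrix R[X] + G.degMatrix R[X] =
        (y ^ 2 + C ((k : R) - 1)) • 1 + y • (G.adjMatrix R).map C := by
    rw [degMatrix_of_isRegularOfDegree _ hreg, adjMatrix_map, C_sub, C_1, map_natCast]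
    module
  have bass := pow_card_mul_det_smul_one_add_edgeAdj G factor_monic.isRegular.left
  have card_le := card_le_card_edgeFinset_of_isRegularOfDegree hk hreg
  rw [vertex_matrix_eq, ← Nat.add_sub_cancel' card_le, pow_add, mul_assoc] at bass
  rw [edgeLap_of_isRegularOfDegree R hreg, charpoly_smul_one_sub, edgeAdj_map, factor_eq]
  exact factor_monic.isRegular.left.pow _ bass

end Regular

/-- For a `k`-regular graph (`k ≥ 2`) on `n` vertices with `m` edges, the characteristic
polynomial of the edge Laplacian factors as
`((x-k)(x-(k-2)))^(m-n) · det( ((x-k+1)² + (k-1))·I + (x-k+1)·A )`,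
where `A` is the (vertex) adjacency matrix. -/
theorem stmt8 (G : SimpleGraph V) [DecidableRel G.Adj] (k : ℕ) (hk : 2 ≤ k)
    (hreg : G.IsRegularOfDegree k) :
    (edgeLap ℚ G).charpoly =
      ((X - C (k : ℚ)) * (X - C ((k : ℚ) - 2))) ^ (G.edgeFinset.card - Fintype.card V) *
        (((X - C ((k : ℚ) - 1)) ^ 2 + C ((k : ℚ) - 1)) • (1 : Matrix V V ℚ[X]) +
            (X - C ((k : ℚ) - 1)) • (G.adjMatrix ℚ).map C).det :=
  stmt8_general ℚ hk hreg
end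

section
/- Let X be a finite simple graph that is acyclic (a forest). Then every principal minor of the edge Laplacian N(X) equals the corresponding principal minor of D(X); that is, for every finite set S of darts of X, the determinant of the principal submatrix of N(X) with rows and columns indexed by S equals ∏_{d ∈ S} (deg(head(d)) − 1). -/
open Matrix

variable {V : Type*} [Fintype V] [DecidableEq V]

/-!
In a forest, each dart `d` carries the branch of vertices that remain reachable from its head once
its edge is deleted. Every edge being a bridge, a non-backtracking step from `d` to `e` strictly
shrinks the branch. Hence the off-diagonal entries of the edge Laplacian only point from larger to
strictly smaller branches, so in the Leibniz expansion of a principal minor every permutation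
other than the identity contributes zero.
-/

section TriangularDeterminant

variable {n R α : Type*} [Preorder α]

theorem perm_eq_one_of_forall_ne_lt_apply [Finite n] {σ : Equiv.Perm n} (f : n → α)
    (hσ : ∀ i, σ i ≠ i → f i < f (σ i)) : σ = 1 := by
  by_contra hne
  have hmoved : {i | σ i ≠ i}.Nonempty := by
    simpa [Equiv.ext_iff, Set.Nonempty] using hne
  obtain ⟨i, hi, hmax⟩ := {i | σ i ≠ i}.toFinite.exists_maximalFor f _ hmoved
  have hσi : σ (σ i) ≠ σ i := σ.injective.ne hi
  exact (hσ i hi).not_ge (hmax hσi (hσ i hi).le)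

theorem det_eq_prod_diag_of_lt_of_apply_ne_zero [Fintype n] [DecidableEq n] [CommRing R]
    {A : Matrix n n R} (f : n → α) (hA : ∀ i j, i ≠ j → A i j ≠ 0 → f j < f i) :
    A.det = ∏ i, A i i := by
  rw [Matrix.det_apply, Finset.sum_eq_single_of_mem 1 (Finset.mem_univ _)]
  · simp
  · intro σ _ hσ
    obtain ⟨i, hi⟩ : ∃ i, A (σ i) i = 0 := by
      by_contra! hne
      exact hσ (perm_eq_one_of_forall_ne_lt_apply f fun i hi => hA _ _ hi (hne i))
    have hprod : ∏ j, A (σ j) j = 0 := Finset.prod_eq_zero (Finset.mem_univ i) hi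
    rw [hprod, smul_zero]

end TriangularDeterminant

section Branch

variable {W : Type*} {G : SimpleGraph W}

/-- The branch of `G` at a dart `d`: the vertices reachable from the head of `d` in the graph
without the edge of `d`. In a forest this is the part of the tree lying beyond `d`; inclusion of
branches orders the darts. -/
def branch (d : G.Dart) : Set W :=
  {x | (G.deleteEdges {d.edge}).Reachable d.snd x}

theorem mem_branch_iff_exists_walk {d : G.Dart} {x : W} :
    x ∈ branch d ↔ ∃ p : G.Walk d.snd x, d.edge ∉ p.edges :=
  SimpleGraph.reachable_deleteEdges_iff_exists_walk

theorem snd_mem_branch (d : G.Dart) : d.snd ∈ branch d :=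
  SimpleGraph.Reachable.refl _

theorem fst_notMem_branch (hG : G.IsAcyclic) (d : G.Dart) : d.fst ∉ branch d := fun h =>
  SimpleGraph.isBridge_iff.1 (SimpleGraph.isAcyclic_iff_forall_adj_isBridge.1 hG d.adj) h.symm

theorem fst_notMem_support_of_edge_notMem_edges (hG : G.IsAcyclic) {d : G.Dart} {x : W}
    {p : G.Walk d.snd x} (hp : d.edge ∉ p.edges) : d.fst ∉ p.support := by
  classical
  intro hmem
  exact fst_notMem_branch hG d <| mem_branch_iff_exists_walk.2
    ⟨p.takeUntil d.fst hmem, fun h => hp (p.edges_takeUntil_subset_edges hmem h)⟩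

theorem branch_subset_branch (hG : G.IsAcyclic) {d e : G.Dart} (hadj : G.DartAdj d e)
    (hne : d.fst ≠ e.snd) : branch e ⊆ branch d := by
  intro x hx
  obtain ⟨p, hp⟩ := mem_branch_iff_exists_walk.1 hx
  have hd : d.edge ∉ (SimpleGraph.Walk.cons e.adj p).edges := by
    rw [SimpleGraph.Walk.edges_cons, List.mem_cons, not_or]
    constructor
    · intro h
      rcases SimpleGraph.dart_edge_eq_iff d e |>.1 h with rfl | rfl
      · exact d.adj.ne hadj.symm
      · exact hne rfl
    · intro h
      have hmem : d.snd ∈ p.support := p.snd_mem_support_of_mem_edges h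
      rw [show d.snd = e.fst from hadj] at hmem
      exact fst_notMem_support_of_edge_notMem_edges hG hp hmem
  exact mem_branch_iff_exists_walk.2 ⟨(SimpleGraph.Walk.cons e.adj p).copy hadj.symm rfl, by
    rwa [SimpleGraph.Walk.edges_copy]⟩

theorem branch_ssubset_branch (hG : G.IsAcyclic) {d e : G.Dart} (hadj : G.DartAdj d e)
    (hne : d.fst ≠ e.snd) : branch e ⊂ branch d := by
  refine Set.ssubset_iff_exists.2 ⟨branch_subset_branch hG hadj hne, d.snd, snd_mem_branch d, ?_⟩
  rw [show d.snd = e.fst from hadj]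
  exact fst_notMem_branch hG e

end Branch

section EdgeLaplacian

variable {R : Type*} [Ring R] {G : SimpleGraph V} [DecidableRel G.Adj]

theorem edgeLap_apply_self (d : G.Dart) : edgeLap R G d d = (G.degree d.snd : R) - 1 := by
  simp [edgeLap, degDiag, edgeAdj, d.adj.ne']

theorem dartAdj_and_ne_of_edgeLap_apply_ne_zero {d e : G.Dart} (hde : d ≠ e)
    (h : edgeLap R G d e ≠ 0) : G.DartAdj d e ∧ d.fst ≠ e.snd := by
  simp only [edgeLap, degDiag, Matrix.sub_apply, Matrix.diagonal_apply_ne _ hde, zero_sub,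
    neg_ne_zero, edgeAdj] at h
  exact (ite_ne_right_iff.1 h).1

end EdgeLaplacian

theorem stmt14_general {R : Type*} [CommRing R] (G : SimpleGraph V) [DecidableRel G.Adj]
    (hacyc : G.IsAcyclic) (S : Finset G.Dart) :
    ((edgeLap R G).submatrix (fun d : {d : G.Dart // d ∈ S} => (d : G.Dart))
        (fun d : {d : G.Dart // d ∈ S} => (d : G.Dart))).det =
      ∏ d ∈ S, ((G.degree d.toProd.2 : R) - 1) := by
  rw [det_eq_prod_diag_of_lt_of_apply_ne_zero
    (fun d : {d : G.Dart // d ∈ S} => branch (d : G.Dart)),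
    ← Finset.prod_coe_sort S]
  · exact Finset.prod_congr rfl fun d _ => edgeLap_apply_self (d : G.Dart)
  · intro d e hde h
    obtain ⟨hadj, hne⟩ :=
      dartAdj_and_ne_of_edgeLap_apply_ne_zero (Subtype.coe_injective.ne hde) h
    exact branch_ssubset_branch hacyc hadj hne

/-- For a forest, every principal minor of the edge Laplacian equals the corresponding
principal minor of the diagonal matrix `D`: for any finite set `S` of darts, the determinant
of the principal submatrix of `N` indexed by `S` is `∏_{d ∈ S} (deg(head d) - 1)`. -/
theorem stmt14 (G : SimpleGraph V) [DecidableRel G.Adj] (hacyc : G.IsAcyclic)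
    (S : Finset G.Dart) :
    ((edgeLap ℚ G).submatrix (fun d : {d : G.Dart // d ∈ S} => (d : G.Dart))
        (fun d : {d : G.Dart // d ∈ S} => (d : G.Dart))).det =
      ∏ d ∈ S, ((G.degree d.toProd.2 : ℚ) - 1) :=
  stmt14_general G hacyc S
end

section
/- Let X be a finite connected simple graph in which every vertex has degree at least 2 and some vertex has degree at least 3 (so X is not a cycle graph and has no pendant vertices). Then the edge adjacency matrix M = M(X) is irreducible: for all darts d, e of X there exists k ≥ 1 such that (M^k)_{d,e} > 0. -/
open Matrix

variable {V : Type*} [Fintype V] [DecidableEq V]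

/-!
Dividing row `d` of the edge adjacency matrix by `deg (head d) - 1` gives the transition matrix of
the non-backtracking random walk, which is doubly stochastic because the nonzero entries of a
column `e` all carry the factor `1 / (deg (tail e) - 1)`. No mass can flow into a forward-closed
set of states of a doubly stochastic matrix, so reachability by non-backtracking walks is
symmetric, and it is enough to relate any two darts by non-backtracking steps taken in either
direction. Two distinct darts `d`, `e` with the same tail are linked by the steps `σ d → e` and
`σ e → d`. Three distinct darts `a`, `b`, `c` at a vertex of degree at least three therefore give
`σ a → b ← σ c → a`, which links `a` to its reversal; connectedness spreads this to all darts.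
-/

open Relation

section PositiveEntries

variable {n R : Type*}

theorem isIrreducible_of_transGen_pos [Ring R] [LinearOrder R] {A : Matrix n n R}
    (hA : ∀ i j, 0 ≤ A i j) (h : ∀ i j, TransGen (fun i j => 0 < A i j) i j) :
    A.IsIrreducible := by
  let := A.toQuiver
  refine ⟨hA, fun i j => ?_⟩
  induction h i j with
  | single hij => exact ⟨Quiver.Hom.toPath ⟨hij⟩, Nat.one_pos⟩
  | tail _ hjk ih =>
    obtain ⟨p, -⟩ := ih
    exact ⟨p.cons ⟨hjk⟩, Nat.succ_pos _⟩

variable [Fintype n] [AddCommGroup R] [PartialOrder R] [IsOrderedAddMonoid R] {A : Matrix n n R}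

theorem apply_eq_zero_of_forward_closed (hA : ∀ i j, 0 ≤ A i j)
    (hbal : ∀ i, ∑ j, A i j = ∑ j, A j i) {S : Finset n} (hS : ∀ i ∈ S, ∀ j ∉ S, A i j = 0)
    {i j : n} (hi : i ∉ S) (hj : j ∈ S) : A i j = 0 := by
  classical
  have outflow : ∑ k ∈ S, ∑ l, A k l = ∑ k ∈ S, ∑ l ∈ S, A k l :=
    Finset.sum_congr rfl fun k hk =>
      (Finset.sum_subset S.subset_univ fun l _ hl => hS k hk l hl).symm
  have inflow : ∑ k ∈ S, ∑ l, A l k =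
      ∑ k ∈ S, ∑ l ∈ S, A k l + ∑ k ∈ S, ∑ l ∈ Sᶜ, A l k := by
    rw [Finset.sum_comm (f := fun k l => A k l), ← Finset.sum_add_distrib]
    simp only [Finset.sum_add_sum_compl]
  have boundary_eq_zero : ∑ k ∈ S, ∑ l ∈ Sᶜ, A l k = 0 := by
    rw [← Finset.sum_congr rfl fun k _ => hbal k, outflow] at inflow
    exact left_eq_add.mp inflow
  have column_eq_zero : ∑ l ∈ Sᶜ, A l j = 0 :=
    (Finset.sum_eq_zero_iff_of_nonneg fun k _ => Finset.sum_nonneg fun l _ => hA l k).mp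
      boundary_eq_zero j hj
  exact (Finset.sum_eq_zero_iff_of_nonneg fun l _ => hA l j).mp column_eq_zero i
    (Finset.mem_compl.mpr hi)

theorem reflTransGen_pos_of_pos_symm (hA : ∀ i j, 0 ≤ A i j)
    (hbal : ∀ i, ∑ j, A i j = ∑ j, A j i) {i j : n} (hij : 0 < A i j) :
    ReflTransGen (fun i j => 0 < A i j) j i := by
  classical
  let S : Finset n := {k | ReflTransGen (fun i j => 0 < A i j) j k}
  have mem_S (k : n) : k ∈ S ↔ ReflTransGen (fun i j => 0 < A i j) j k := by simp [S]
  have S_closed : ∀ k ∈ S, ∀ l ∉ S, A k l = 0 := fun k hk l hl => by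
    by_contra hkl
    exact hl ((mem_S l).mpr (((mem_S k).mp hk).tail ((hA k l).lt_of_ne' hkl)))
  by_contra hi
  exact hij.ne' (apply_eq_zero_of_forward_closed hA hbal S_closed (mt (mem_S i).mp hi)
    ((mem_S j).mpr .refl))

theorem reflTransGen_pos_of_eqvGen (hA : ∀ i j, 0 ≤ A i j)
    (hbal : ∀ i, ∑ j, A i j = ∑ j, A j i) {i j : n} (h : EqvGen (fun i j => 0 < A i j) i j) :
    ReflTransGen (fun i j => 0 < A i j) i j := by
  rw [← EqvGen.reflTransGen_symmGen] at h
  induction h with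
  | refl => exact .refl
  | tail _ hstep ih =>
    rcases hstep with forward | backward
    · exact ih.tail forward
    · exact ih.trans (reflTransGen_pos_of_pos_symm hA hbal backward)

end PositiveEntries

section NonBacktracking

variable {α : Type*} {G : SimpleGraph α}

/-- `d` can be followed by `e` in a non-backtracking walk: `e` starts at the head of `d` and is not
the reversal of `d`. -/
def NBStep (d e : G.Dart) : Prop :=
  d.snd = e.fst ∧ d.fst ≠ e.snd

theorem nbStep_symm_of_fst_eq {d e : G.Dart} (hfst : d.fst = e.fst) (hne : d ≠ e) :
    NBStep d.symm e :=
  ⟨hfst, fun hsnd => hne (SimpleGraph.Dart.ext d e (Prod.ext hfst hsnd))⟩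

theorem exists_nbStep (d : G.Dart) [Fintype (G.neighborSet d.snd)] (hd : 2 ≤ G.degree d.snd) :
    ∃ e, NBStep d e := by
  obtain ⟨w, hw, hne⟩ := Finset.exists_mem_ne (s := G.neighborFinset d.snd) hd d.fst
  exact ⟨⟨(d.snd, w), (G.mem_neighborFinset _ w).mp hw⟩, rfl, hne.symm⟩

theorem dart_induction (hconn : G.Preconnected) {P : G.Dart → Prop}
    (hsymm : ∀ d, P d → P d.symm) (hfst : ∀ d e, d.fst = e.fst → P d → P e)
    {d : G.Dart} (hd : P d) (e : G.Dart) : P e := by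
  suffices ∀ u, ReflTransGen G.Adj d.fst u → ∀ f : G.Dart, f.fst = u → P f from
    this e.fst ((SimpleGraph.reachable_iff_reflTransGen _ _).mp (hconn _ _)) e rfl
  intro u hu
  induction hu with
  | refl => exact fun f hf => hfst d f hf.symm hd
  | tail _ hbc ih => exact fun f hf => hfst _ f hf.symm (hsymm _ (ih ⟨(_, _), hbc⟩ rfl))

theorem exists_eqvGen_nbStep_symm {v : α} [Fintype (G.neighborSet v)] (hv : 3 ≤ G.degree v) :
    ∃ d : G.Dart, EqvGen NBStep d d.symm := by
  obtain ⟨x, hx, y, hy, z, hz, hxy, hxz, hyz⟩ := Finset.two_lt_card.mp hv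
  rw [SimpleGraph.mem_neighborFinset] at hx hy hz
  let a : G.Dart := ⟨(v, x), hx⟩
  let b : G.Dart := ⟨(v, y), hy⟩
  let c : G.Dart := ⟨(v, z), hz⟩
  have hab : EqvGen NBStep a.symm b := .rel _ _ ⟨rfl, hxy⟩
  have hcb : EqvGen NBStep c.symm b := .rel _ _ ⟨rfl, hyz.symm⟩
  have hca : EqvGen NBStep c.symm a := .rel _ _ ⟨rfl, hxz.symm⟩
  exact ⟨a, (hca.symm.trans _ _ _ hcb).trans _ _ _ hab.symm⟩

theorem eqvGen_nbStep (hconn : G.Preconnected) {v : α} [Fintype (G.neighborSet v)]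
    (hv : 3 ≤ G.degree v) (d e : G.Dart) : EqvGen NBStep d e := by
  obtain ⟨a, ha⟩ := exists_eqvGen_nbStep_symm hv
  have linked : ∀ f : G.Dart, EqvGen NBStep a f ∧ EqvGen NBStep a f.symm := by
    refine dart_induction hconn (fun f hf => ?_) (fun f g hfg hf => ?_) (d := a) ⟨.refl a, ha⟩
    · rw [f.symm_symm]
      exact hf.symm
    · rcases eq_or_ne f g with rfl | hne
      · exact hf
      · have hg : EqvGen NBStep f.symm g := .rel _ _ (nbStep_symm_of_fst_eq hfg hne)
        have hg_symm : EqvGen NBStep g.symm f := .rel _ _ (nbStep_symm_of_fst_eq hfg.symm hne.symm)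
        exact ⟨hf.2.trans _ _ _ hg, hf.1.trans _ _ _ hg_symm.symm⟩
  exact (linked d).1.symm.trans _ _ _ (linked e).1

end NonBacktracking

section EdgeAdjacency

variable {α : Type*} [DecidableEq α] (R : Type*) [Ring R] (G : SimpleGraph α) [DecidableRel G.Adj]

theorem edgeAdj_symm_symm (d e : G.Dart) : edgeAdj R G e.symm d.symm = edgeAdj R G d e := by
  simp only [edgeAdj, SimpleGraph.Dart.symm_toProd, Prod.fst_swap, Prod.snd_swap, eq_comm, ne_comm]

theorem edgeAdj_add_ite_symm (d e : G.Dart) :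
    edgeAdj R G d e + (if e = d.symm then 1 else 0) = if e.fst = d.snd then 1 else 0 := by
  have hsymm : e = d.symm ↔ e.fst = d.snd ∧ e.snd = d.fst := by
    rw [SimpleGraph.Dart.ext_iff, Prod.ext_iff]
    rfl
  simp only [edgeAdj, hsymm]
  grind

variable [Fintype α]

theorem sum_edgeAdj_row (d : G.Dart) : ∑ e, edgeAdj R G d e = G.degree d.snd - 1 := by
  rw [eq_sub_iff_add_eq, ← G.dart_fst_fiber_card_eq_degree, Finset.natCast_card_filter]
  simp only [← edgeAdj_add_ite_symm, Finset.sum_add_distrib, Finset.sum_ite_eq', Finset.mem_univ,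
    if_true]

theorem sum_edgeAdj_col (e : G.Dart) : ∑ d, edgeAdj R G d e = G.degree e.fst - 1 := by
  calc ∑ d, edgeAdj R G d e
      = ∑ d : G.Dart, edgeAdj R G e.symm d.symm :=
        Finset.sum_congr rfl fun d _ => (edgeAdj_symm_symm R G d e).symm
    _ = ∑ d, edgeAdj R G e.symm d :=
        Equiv.sum_comp SimpleGraph.Dart.symm_involutive.toPerm fun d => edgeAdj R G e.symm d
    _ = G.degree e.fst - 1 := sum_edgeAdj_row R G e.symm

end EdgeAdjacency

section EdgeAdjacencyPositivity

variable {α R : Type*} [DecidableEq α] [Ring R] [LinearOrder R] [IsStrictOrderedRing R]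
  {G : SimpleGraph α} [DecidableRel G.Adj]

theorem edgeAdj_pos_iff {d e : G.Dart} : 0 < edgeAdj R G d e ↔ NBStep d e := by
  unfold edgeAdj NBStep
  split_ifs with h <;> simp [h]

theorem edgeAdj_nonneg (d e : G.Dart) : 0 ≤ edgeAdj R G d e := by
  unfold edgeAdj
  split_ifs
  exacts [zero_le_one, le_rfl]

end EdgeAdjacencyPositivity

theorem degree_sub_one_pos {α : Type*} {G : SimpleGraph α} {v : α} [Fintype (G.neighborSet v)]
    (hv : 2 ≤ G.degree v) (K : Type*) [Ring K] [LinearOrder K] [IsStrictOrderedRing K] :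
    (0 : K) < G.degree v - 1 :=
  sub_pos.mpr (by exact_mod_cast hv)

section Transition

variable {α : Type*} [Fintype α] [DecidableEq α] (K : Type*) [Field K] (G : SimpleGraph α)
  [DecidableRel G.Adj]

/-- The transition matrix of the non-backtracking random walk on the darts of `G`. A row `d` whose
head has degree `1` is zero, by the convention `x / 0 = 0`. -/
def nbTransition : Matrix G.Dart G.Dart K :=
  fun d e => edgeAdj K G d e / (G.degree d.snd - 1)

variable {G}

theorem nbTransition_eq_div_degree_fst (d e : G.Dart) :
    nbTransition K G d e = edgeAdj K G d e / (G.degree e.fst - 1) := by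
  unfold nbTransition edgeAdj
  split_ifs with h
  · rw [h.1]
  · rw [zero_div, zero_div]

variable [LinearOrder K] [IsStrictOrderedRing K]

theorem nbTransition_pos_iff (hmin : ∀ v, 2 ≤ G.degree v) {d e : G.Dart} :
    0 < nbTransition K G d e ↔ NBStep d e := by
  rw [nbTransition, div_pos_iff_of_pos_right (degree_sub_one_pos (hmin d.snd) K), edgeAdj_pos_iff]

theorem nbTransition_mem_doublyStochastic (hmin : ∀ v, 2 ≤ G.degree v) :
    nbTransition K G ∈ doublyStochastic K G.Dart := by
  refine mem_doublyStochastic_iff_sum.mpr ⟨fun d e => ?_, fun d => ?_, fun e => ?_⟩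
  · exact div_nonneg (edgeAdj_nonneg d e) (degree_sub_one_pos (hmin d.snd) K).le
  · simp only [nbTransition]
    rw [← Finset.sum_div, sum_edgeAdj_row, div_self (degree_sub_one_pos (hmin d.snd) K).ne']
  · simp only [nbTransition_eq_div_degree_fst]
    rw [← Finset.sum_div, sum_edgeAdj_col, div_self (degree_sub_one_pos (hmin e.fst) K).ne']

end Transition

theorem reflTransGen_nbStep_of_eqvGen {α : Type*} [Fintype α] {G : SimpleGraph α}
    [DecidableRel G.Adj] (hmin : ∀ v, 2 ≤ G.degree v) {d e : G.Dart} (h : EqvGen NBStep d e) :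
    ReflTransGen NBStep d e := by
  classical
  have hP := nbTransition_mem_doublyStochastic ℚ hmin
  have hbal (f : G.Dart) : ∑ g, nbTransition ℚ G f g = ∑ g, nbTransition ℚ G g f := by
    rw [sum_row_of_mem_doublyStochastic hP, sum_col_of_mem_doublyStochastic hP]
  have hpos : EqvGen (fun f g => 0 < nbTransition ℚ G f g) d e :=
    EqvGen.mono (fun _ _ => (nbTransition_pos_iff ℚ hmin).mpr) _ _ h
  exact ReflTransGen.mono (fun _ _ => (nbTransition_pos_iff ℚ hmin).mp) _ _
    (reflTransGen_pos_of_eqvGen (fun _ _ => nonneg_of_mem_doublyStochastic hP) hbal hpos)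

theorem stmt15_general {R : Type*} [Ring R] [LinearOrder R] [IsStrictOrderedRing R]
    (G : SimpleGraph V) [DecidableRel G.Adj] (hconn : G.Connected)
    (hmin : ∀ v : V, 2 ≤ G.degree v) (hbig : ∃ v : V, 3 ≤ G.degree v) :
    (edgeAdj R G).IsIrreducible := by
  obtain ⟨v, hv⟩ := hbig
  refine isIrreducible_of_transGen_pos edgeAdj_nonneg fun d e => ?_
  obtain ⟨f, hdf⟩ := exists_nbStep d (hmin d.snd)
  have hfe : ReflTransGen NBStep f e :=
    reflTransGen_nbStep_of_eqvGen hmin (eqvGen_nbStep hconn.preconnected hv f e)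
  exact TransGen.mono (fun _ _ => edgeAdj_pos_iff.mpr) _ _ (.head' hdf hfe)

/-- If `X` is connected, every vertex has degree at least 2, and some vertex has degree at
least 3 (so `X` is not a cycle and has no pendant vertex), then the edge adjacency matrix is
irreducible. -/
theorem stmt15 (G : SimpleGraph V) [DecidableRel G.Adj] (hconn : G.Connected)
    (hmin : ∀ v : V, 2 ≤ G.degree v) (hbig : ∃ v : V, 3 ≤ G.degree v) :
    ∀ d e : G.Dart, ∃ k : ℕ, 1 ≤ k ∧ 0 < (edgeAdj ℚ G ^ k) d e :=
  (isIrreducible_iff_exists_pow_pos edgeAdj_nonneg).mp (stmt15_general G hconn hmin hbig)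
end

section
/- Let X be a finite simple graph with at least one edge whose edge adjacency matrix M = M(X) is irreducible, i.e., for all darts d, e there exists k ≥ 1 with (M^k)_{d,e} ≠ 0. Then 0 is a simple eigenvalue of the edge Laplacian N(X): the multiplicity of 0 as a root of the characteristic polynomial (over ℝ) of N(X) equals 1. -/
open Matrix Polynomial

variable {V : Type*} [Fintype V] [DecidableEq V]

/-!
Write `N = D - M`, where `D` is the diagonal matrix of row sums of the nonnegative matrix `M`, so
that `(N v)_i = ∑ j, M_ij (v_i - v_j)`. Everything follows from the maximum principle: `N v` is
nonnegative where `v` is maximal, and if it vanishes there then `v` takes the same value at all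
out-neighbours. If some index can be reached from every other one, then `N v = 0` forces the maximum
and the minimum of `v` to agree with its value at that index, so `ker N` consists of the constant
vectors. If `N v` is a constant `c`, then comparing the signs at a maximum and at a minimum of `v`
gives `c = 0`. So `ker N` meets `range N` trivially, and the algebraic multiplicity of the
eigenvalue `0` is the geometric one.
-/

section LinearAlgebra

open LinearMap

theorem maxGenEigenspace_zero_eq_ker_of_disjoint {R M : Type*} [CommRing R] [AddCommGroup M]
    [Module R M] {f : Module.End R M} (hf : Disjoint (ker f) (range f)) :
    f.maxGenEigenspace 0 = ker f := by
  have apply_eq_zero_of_pow : ∀ (k : ℕ) (x : M), (f ^ k) x = 0 → f x = 0 := by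
    intro k
    induction k with
    | zero =>
      intro x hx
      rw [pow_zero, Module.End.one_apply] at hx
      rw [hx, map_zero]
    | succ k ih =>
      intro x hx
      rw [pow_succ, Module.End.mul_apply] at hx
      exact Submodule.disjoint_def.1 hf (f x) (ih (f x) hx) (mem_range_self f x)
  ext x
  simp only [Module.End.mem_maxGenEigenspace, zero_smul, sub_zero, mem_ker]
  exact ⟨fun ⟨k, hk⟩ => apply_eq_zero_of_pow k x hk, fun hx => ⟨1, by rwa [pow_one]⟩⟩

theorem rootMultiplicity_zero_charpoly_eq_finrank_ker {K M : Type*} [Field K] [AddCommGroup M]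
    [Module K M] [FiniteDimensional K M] {f : Module.End K M} (hf : Disjoint (ker f) (range f)) :
    f.charpoly.rootMultiplicity 0 = Module.finrank K (ker f) := by
  rw [← finrank_maxGenEigenspace_eq, maxGenEigenspace_zero_eq_ker_of_disjoint hf]

end LinearAlgebra

section RowLaplacian

variable {ι : Type*} [Fintype ι] [DecidableEq ι]

/-- The Laplacian of the weighted digraph with weight matrix `A`: the diagonal matrix of row sums
of `A`, minus `A`. It abstracts from the edge Laplacian only that its rows sum to zero. -/
def rowLaplacian {R : Type*} [Ring R] (A : Matrix ι ι R) : Matrix ι ι R :=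
  diagonal (fun i => ∑ j, A i j) - A

section Ring

variable {R : Type*} [Ring R]

theorem rowLaplacian_mulVec_apply (A : Matrix ι ι R) (v : ι → R) (i : ι) :
    (rowLaplacian A *ᵥ v) i = ∑ j, A i j * (v i - v j) := by
  simp only [rowLaplacian, sub_mulVec, Pi.sub_apply, mulVec_diagonal, mul_sub,
    Finset.sum_sub_distrib, ← Finset.sum_mul]
  rfl

theorem rowLaplacian_mulVec_const (A : Matrix ι ι R) (c : R) :
    rowLaplacian A *ᵥ Function.const ι c = 0 := by
  ext i
  simp [rowLaplacian_mulVec_apply]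

theorem rowLaplacian_mulVec_apply_nonneg_of_forall_le [PartialOrder R] [IsOrderedRing R]
    {A : Matrix ι ι R} (hA : ∀ i j, 0 ≤ A i j) {v : ι → R} {i : ι} (hi : ∀ j, v j ≤ v i) :
    0 ≤ (rowLaplacian A *ᵥ v) i := by
  rw [rowLaplacian_mulVec_apply]
  exact Finset.sum_nonneg fun j _ => mul_nonneg (hA i j) (sub_nonneg.2 (hi j))

end Ring

section LinearOrderedRing

variable {R : Type*} [Ring R] [LinearOrder R] [IsStrictOrderedRing R] {A : Matrix ι ι R}
  {v : ι → R} {c : R} {i j r : ι}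

theorem nonneg_of_rowLaplacian_mulVec_eq_const [Nonempty ι] (hA : ∀ i j, 0 ≤ A i j)
    (hv : rowLaplacian A *ᵥ v = Function.const ι c) : 0 ≤ c := by
  obtain ⟨i, hi⟩ := Finite.exists_max v
  simpa only [hv, Function.const_apply] using rowLaplacian_mulVec_apply_nonneg_of_forall_le hA hi

theorem eq_zero_of_rowLaplacian_mulVec_eq_const [Nonempty ι] (hA : ∀ i j, 0 ≤ A i j)
    (hv : rowLaplacian A *ᵥ v = Function.const ι c) : c = 0 := by
  have hneg : rowLaplacian A *ᵥ (-v) = Function.const ι (-c) := by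
    rw [mulVec_neg, hv]
    rfl
  exact le_antisymm (neg_nonneg.1 (nonneg_of_rowLaplacian_mulVec_eq_const hA hneg))
    (nonneg_of_rowLaplacian_mulVec_eq_const hA hv)

theorem apply_eq_of_rowLaplacian_mulVec_apply_eq_zero (hA : ∀ i j, 0 ≤ A i j)
    (hv : (rowLaplacian A *ᵥ v) i = 0) (hi : ∀ j, v j ≤ v i) (hij : A i j ≠ 0) : v j = v i := by
  have hterm : ∀ j ∈ Finset.univ, 0 ≤ A i j * (v i - v j) := fun j _ =>
    mul_nonneg (hA i j) (sub_nonneg.2 (hi j))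
  rw [rowLaplacian_mulVec_apply, Finset.sum_eq_zero_iff_of_nonneg hterm] at hv
  exact (sub_eq_zero.1 ((mul_eq_zero.1 (hv j (Finset.mem_univ j))).resolve_left hij)).symm

theorem apply_eq_of_pow_apply_ne_zero (hA : ∀ i j, 0 ≤ A i j) (hv : rowLaplacian A *ᵥ v = 0)
    (hi : ∀ j, v j ≤ v i) (k : ℕ) (hij : (A ^ k) i j ≠ 0) : v j = v i := by
  induction k generalizing j with
  | zero =>
    rw [pow_zero] at hij
    by_contra hne
    exact hij (one_apply_ne fun h => hne (congrArg v h.symm))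
  | succ k ih =>
    rw [pow_succ, mul_apply] at hij
    obtain ⟨l, -, hl⟩ := Finset.exists_ne_zero_of_sum_ne_zero hij
    have hli : v l = v i := ih (left_ne_zero_of_mul hl)
    have hjl : v j = v l := apply_eq_of_rowLaplacian_mulVec_apply_eq_zero hA (congrFun hv l)
      (hli ▸ hi) (right_ne_zero_of_mul hl)
    exact hjl.trans hli

theorem apply_le_apply_of_rowLaplacian_mulVec_eq_zero (hA : ∀ i j, 0 ≤ A i j)
    (hr : ∀ i, ∃ k : ℕ, (A ^ k) i r ≠ 0) (hv : rowLaplacian A *ᵥ v = 0) (i : ι) : v i ≤ v r := by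
  have : Nonempty ι := ⟨r⟩
  obtain ⟨m, hm⟩ := Finite.exists_max v
  obtain ⟨k, hk⟩ := hr m
  exact (hm i).trans_eq (apply_eq_of_pow_apply_ne_zero hA hv hm k hk).symm

theorem eq_const_of_rowLaplacian_mulVec_eq_zero (hA : ∀ i j, 0 ≤ A i j)
    (hr : ∀ i, ∃ k : ℕ, (A ^ k) i r ≠ 0) (hv : rowLaplacian A *ᵥ v = 0) :
    v = Function.const ι (v r) := by
  have hneg : rowLaplacian A *ᵥ (-v) = 0 := by rw [mulVec_neg, hv, neg_zero]
  funext i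
  exact le_antisymm (apply_le_apply_of_rowLaplacian_mulVec_eq_zero hA hr hv i)
    (neg_le_neg_iff.1 (apply_le_apply_of_rowLaplacian_mulVec_eq_zero hA hr hneg i))

end LinearOrderedRing

section LinearOrderedField

open LinearMap

variable {K : Type*} [Field K] [LinearOrder K] [IsStrictOrderedRing K] {A : Matrix ι ι K} {r : ι}

theorem ker_toLin'_rowLaplacian (hA : ∀ i j, 0 ≤ A i j) (hr : ∀ i, ∃ k : ℕ, (A ^ k) i r ≠ 0) :
    ker (toLin' (rowLaplacian A)) = Submodule.span K {Function.const ι (1 : K)} := by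
  ext v
  rw [mem_ker, toLin'_apply, Submodule.mem_span_singleton]
  constructor
  · intro hv
    refine ⟨v r, ?_⟩
    rw [eq_const_of_rowLaplacian_mulVec_eq_zero hA hr hv]
    ext i
    simp
  · rintro ⟨c, rfl⟩
    rw [mulVec_smul, rowLaplacian_mulVec_const, smul_zero]

theorem disjoint_ker_range_toLin'_rowLaplacian (hA : ∀ i j, 0 ≤ A i j)
    (hr : ∀ i, ∃ k : ℕ, (A ^ k) i r ≠ 0) :
    Disjoint (ker (toLin' (rowLaplacian A))) (range (toLin' (rowLaplacian A))) := by
  have : Nonempty ι := ⟨r⟩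
  rw [Submodule.disjoint_def]
  rintro _ hker ⟨v, rfl⟩
  rw [mem_ker, toLin'_apply] at hker
  have hconst := eq_const_of_rowLaplacian_mulVec_eq_zero hA hr hker
  rw [toLin'_apply] at hconst ⊢
  rw [hconst, eq_zero_of_rowLaplacian_mulVec_eq_const hA hconst]
  rfl

theorem rootMultiplicity_zero_charpoly_rowLaplacian (hA : ∀ i j, 0 ≤ A i j)
    (hr : ∀ i, ∃ k : ℕ, (A ^ k) i r ≠ 0) :
    (rowLaplacian A).charpoly.rootMultiplicity 0 = 1 := by
  rw [← charpoly_toLin', rootMultiplicity_zero_charpoly_eq_finrank_ker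
    (disjoint_ker_range_toLin'_rowLaplacian hA hr), ker_toLin'_rowLaplacian hA hr]
  exact finrank_span_singleton fun h => one_ne_zero (congrFun h r)

end LinearOrderedField

end RowLaplacian

section EdgeLaplacian

variable (R : Type*) [Ring R]

section

variable {W : Type*} [DecidableEq W] (G : SimpleGraph W) [DecidableRel G.Adj]

theorem edgeAdj_apply_nonneg [PartialOrder R] [IsOrderedRing R] (d e : G.Dart) :
    0 ≤ edgeAdj R G d e := by
  unfold edgeAdj
  split_ifs
  exacts [zero_le_one, le_rfl]

theorem edgeAdj_apply_eq_sub (d e : G.Dart) :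
    edgeAdj R G d e = (if e.fst = d.snd then 1 else 0) - (if e = d.symm then 1 else 0) := by
  have eq_symm_iff : e = d.symm ↔ e.fst = d.snd ∧ d.fst = e.snd := by
    rw [SimpleGraph.Dart.ext_iff, Prod.ext_iff]
    simp [SimpleGraph.Dart.symm, eq_comm]
  by_cases htail : e.fst = d.snd <;> by_cases hback : d.fst = e.snd <;>
    simp [edgeAdj, eq_symm_iff, eq_comm (a := d.snd), htail, hback]

end

variable (G : SimpleGraph V) [DecidableRel G.Adj]

theorem sum_edgeAdj_apply (d : G.Dart) : ∑ e, edgeAdj R G d e = (G.degree d.snd : R) - 1 := by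
  simp only [edgeAdj_apply_eq_sub, Finset.sum_sub_distrib]
  rw [Finset.sum_boole, G.dart_fst_fiber_card_eq_degree, Finset.sum_ite_eq',
    if_pos (Finset.mem_univ _)]

theorem edgeLap_eq_rowLaplacian : edgeLap R G = rowLaplacian (edgeAdj R G) := by
  simp only [edgeLap, degDiag, rowLaplacian, sum_edgeAdj_apply]

end EdgeLaplacian

theorem stmt16_general {K : Type*} [Field K] [LinearOrder K] [IsStrictOrderedRing K]
    (G : SimpleGraph V) [DecidableRel G.Adj] (r : G.Dart)
    (hr : ∀ d : G.Dart, ∃ k : ℕ, (edgeAdj K G ^ k) d r ≠ 0) :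
    (edgeLap K G).charpoly.rootMultiplicity 0 = 1 := by
  rw [edgeLap_eq_rowLaplacian]
  exact rootMultiplicity_zero_charpoly_rowLaplacian (edgeAdj_apply_nonneg K G) hr

/-- If `X` has an edge and its edge adjacency matrix is irreducible, then `0` is a simple
eigenvalue of the edge Laplacian: its multiplicity as a root of the characteristic
polynomial is `1`. -/
theorem stmt16 (G : SimpleGraph V) [DecidableRel G.Adj] (hne : G.edgeSet.Nonempty)
    (hirr : ∀ d e : G.Dart, ∃ k : ℕ, 1 ≤ k ∧ (edgeAdj ℝ G ^ k) d e ≠ 0) :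
    (edgeLap ℝ G).charpoly.rootMultiplicity 0 = 1 := by
  obtain ⟨⟨x, y⟩, hxy⟩ := hne
  exact stmt16_general G ⟨(x, y), hxy⟩ fun d => (hirr d _).imp fun _ hk => hk.2
end
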